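/- Let n ≥ 4 be an integer, let τ, C > 0, and let v : ℝ × [τ,∞) → ℝ satisfy |v(x,t) − v_∞(x,t)| ≤ C t^{−4γ} for all x ∈ ℝ and t ≥ τ. Define the reaction front F(x,t) = (1/2)(v(x,t)² − u(x,t)²)^n. Then for every z ∈ ℝ, lim_{t→∞} t^{2nγ} F(t^α z, t) = (1/2)(2κ|z| η(|z|) + η(|z|)²)^n = (1/2) η''(|z|). -/

import Mathlib

noncomputable def kap : ℝ := 1 / Real.sqrt Real.pi

noncomputable def kap3 : ℝ := -kap / 12

noncomputable def gam (n : ℕ) : ℝ := 1 / (2 * (n : ℝ) + 1)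

noncomputable def eps (n : ℕ) : ℝ := 1 / ((n : ℝ) - 1)

noncomputable def alph (n : ℕ) : ℝ := 1 / 2 - gam n

noncomputable def del (n : ℕ) : ℝ := ((n : ℝ) + 2) / ((n : ℝ) - 1)

noncomputable def lam (n : ℕ) : ℝ :=
  (del n * (del n + 1) / (2 * kap) ^ n) ^ (1 / ((n : ℝ) - 1))

noncomputable def lam0 (n : ℕ) : ℝ :=
  (lam n / (2 * kap)) *
    (-2 * (n : ℝ) * kap3 * del n * (del n + 1) - kap * (del n - 2 * eps n)) /
    (((n : ℝ) - 1) * del n * (del n + 1) + 2 * (2 * del n - 1))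

def IsReactiveProfile (n : ℕ) (η : ℝ → ℝ) : Prop :=
  ContDiffOn ℝ 2 η (Set.Ici 0) ∧
  (∀ z ∈ Set.Ici (0:ℝ), 0 < η z) ∧
  (∀ z ∈ Set.Ici (0:ℝ),
    derivWithin (derivWithin η (Set.Ici 0)) (Set.Ici 0) z
      = (2 * kap * z * η z + (η z) ^ 2) ^ n) ∧
  derivWithin η (Set.Ici 0) 0 = -kap ∧
  Filter.Tendsto η Filter.atTop (nhds 0)

/-- The corrector h: C² on [0,∞), satisfies
h'' + γη + αzη' = n(2κzη+η²)^{n−1}((2κz+2η)h + 2κ₃z³η), h'(0) = 0,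
h(z) − λ₀ z^{2−δ} → 0 as z → ∞. -/
def IsCorrector (n : ℕ) (η h : ℝ → ℝ) : Prop :=
  ContDiffOn ℝ 2 h (Set.Ici 0) ∧
  (∀ z ∈ Set.Ici (0:ℝ),
    derivWithin (derivWithin h (Set.Ici 0)) (Set.Ici 0) z + gam n * η z
        + alph n * z * derivWithin η (Set.Ici 0) z
      = (n : ℝ) * (2 * kap * z * η z + (η z) ^ 2) ^ (n - 1)
          * ((2 * kap * z + 2 * η z) * h z + 2 * kap3 * z ^ 3 * η z)) ∧
  derivWithin h (Set.Ici 0) 0 = 0 ∧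
  Filter.Tendsto (fun z : ℝ => h z - lam0 n * z ^ (2 - del n)) Filter.atTop (nhds 0)

noncomputable def mu1 (y : ℝ) : ℝ :=
  (2 / Real.sqrt Real.pi) * ∫ σ in (0:ℝ)..(y / 2), Real.exp (-σ ^ 2)

def IsDiffusiveProfile (n : ℕ) (μ : ℝ → ℝ) : Prop :=
  ContDiffOn ℝ 2 μ (Set.Ioi 0) ∧
  (∀ y ∈ Set.Ioi (0:ℝ), 0 < μ y) ∧
  (∀ y ∈ Set.Ioi (0:ℝ),
    deriv (deriv μ) y + y / 2 * deriv μ y + eps n * μ y = (2 * mu1 y * μ y) ^ n) ∧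
  Filter.Tendsto (fun y : ℝ => y ^ del n * μ y) (nhdsWithin 0 (Set.Ioi 0)) (nhds (lam n)) ∧
  Filter.Tendsto (fun y : ℝ => y ^ (2 * eps n) * μ y) Filter.atTop (nhds 0)

/-- u(x,t) = −erf(x/(2√t)). -/
noncomputable def uu (x t : ℝ) : ℝ := -mu1 (x / Real.sqrt t)

/-- ū(x,t) = μ₁(|x|/√t). -/
noncomputable def ubar (x t : ℝ) : ℝ := mu1 (|x| / Real.sqrt t)

/-- φ₁(z) = η(z) − λ z^{−δ}. -/
noncomputable def phi1 (n : ℕ) (η : ℝ → ℝ) (z : ℝ) : ℝ := η z - lam n * z ^ (-(del n))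

/-- φ₂(z) = −λ₀ z^{2−δ} + h(z). -/
noncomputable def phi2 (n : ℕ) (h : ℝ → ℝ) (z : ℝ) : ℝ := -lam0 n * z ^ (2 - del n) + h z

/-- μ₃(y) = μ₂(y) − λ y^{−δ}. -/
noncomputable def mu3 (n : ℕ) (μ : ℝ → ℝ) (y : ℝ) : ℝ := μ y - lam n * y ^ (-(del n))

/-- The asymptotic profile v_∞. -/
noncomputable def vInf (n : ℕ) (η μ h : ℝ → ℝ) (x t : ℝ) : ℝ :=
  mu1 (|x| / Real.sqrt t) + t ^ (-(eps n)) * μ (|x| / Real.sqrt t)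
    + t ^ (-(gam n)) * phi1 n η (|x| / t ^ alph n)
    + t ^ (-(3 * gam n)) * phi2 n h (|x| / t ^ alph n)

/-- φ(x,t) = t^{−γ} η(|z|) + t^{−ε} μ₃(|y|) + t^{−3γ} φ₂(|z|). -/
noncomputable def phiFun (n : ℕ) (η μ h : ℝ → ℝ) (x t : ℝ) : ℝ :=
  t ^ (-(gam n)) * η (|x| / t ^ alph n) + t ^ (-(eps n)) * mu3 n μ (|x| / Real.sqrt t)
    + t ^ (-(3 * gam n)) * phi2 n h (|x| / t ^ alph n)

/-!
Along the ray `x = t ^ α * z` the diffusive variable `|x| / √t = |z| * t ^ (-γ)` tends to `0`, so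
only the behaviour of `μ₁` and `μ₂` at the origin matters. The derivative `μ₁'(0) = κ` gives
`t ^ γ * μ₁ → κ * |z|`. Since `γ * (1 + δ) = ε`, the singularity `μ₂(y) ~ λ * y ^ (-δ)` contributes
`λ * |z| ^ (-δ)`, which is exactly what `φ₁` subtracts from `η`. The corrector carries the factor
`t ^ (-3γ)` and drops out. Hence `t ^ γ * v → κ * |z| + η |z|` and `t ^ γ * u → -κ * z`; the terms
`κ² * z²` cancel in the difference of squares.
-/

open Filter Asymptotics Topology

section PowerScaling

variable {a w : ℝ}

theorem tendsto_const_mul_rpow_neg_atTop_nhdsGT_zero (ha : 0 < a) (hw : 0 < w) :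
    Tendsto (fun t : ℝ ↦ w * t ^ (-a)) atTop (𝓝[>] 0) := by
  refine tendsto_nhdsWithin_iff.2 ⟨by simpa using (tendsto_rpow_neg_atTop ha).const_mul w, ?_⟩
  filter_upwards [eventually_gt_atTop 0] with t ht
  exact mul_pos hw (Real.rpow_pos_of_pos ht _)

theorem tendsto_rpow_mul_comp_of_hasDerivAt {f : ℝ → ℝ} {f' : ℝ} (hf : HasDerivAt f f' 0)
    (hf₀ : f 0 = 0) (ha : 0 < a) (w : ℝ) :
    Tendsto (fun t : ℝ ↦ t ^ a * f (w * t ^ (-a))) atTop (𝓝 (f' * w)) := by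
  have hcomp : HasDerivAt (fun s ↦ f (w * s)) (f' * w) 0 := by
    rw [← mul_zero w] at hf
    exact hf.comp 0 (hasDerivAt_const_mul w)
  have hscale : Tendsto (fun t : ℝ ↦ t ^ (-a)) atTop (𝓝[>] 0) := by
    simpa using tendsto_const_mul_rpow_neg_atTop_nhdsGT_zero ha one_pos
  refine (hcomp.tendsto_slope_zero_right.comp hscale).congr' ?_
  filter_upwards [eventually_ge_atTop 0] with t ht
  simp [hf₀, Real.rpow_neg ht]

theorem tendsto_rpow_neg_mul_comp_of_pos {g : ℝ → ℝ} {d L : ℝ}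
    (hg : Tendsto (fun y ↦ y ^ d * g y) (𝓝[>] 0) (𝓝 L)) (ha : 0 < a) (hw : 0 < w) :
    Tendsto (fun t : ℝ ↦ t ^ (-(a * d)) * g (w * t ^ (-a))) atTop (𝓝 (L * w ^ (-d))) := by
  have hscale := tendsto_const_mul_rpow_neg_atTop_nhdsGT_zero ha hw
  refine ((hg.comp hscale).mul_const (w ^ (-d))).congr' ?_
  filter_upwards [eventually_ge_atTop 0] with t ht
  have hpow : (w * t ^ (-a)) ^ d = w ^ d * t ^ (-(a * d)) := by
    rw [Real.mul_rpow hw.le (Real.rpow_nonneg ht _), ← Real.rpow_mul ht, neg_mul]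
  have hcancel : w ^ d * w ^ (-d) = 1 := by rw [← Real.rpow_add hw, add_neg_cancel, Real.rpow_zero]
  rw [Function.comp_apply, hpow]
  linear_combination t ^ (-(a * d)) * g (w * t ^ (-a)) * hcancel

theorem tendsto_rpow_neg_mul_comp_of_nonneg {g : ℝ → ℝ} {d L : ℝ}
    (hg : Tendsto (fun y ↦ y ^ d * g y) (𝓝[>] 0) (𝓝 L)) (hd : 0 < d) (ha : 0 < a) (hw : 0 ≤ w) :
    Tendsto (fun t : ℝ ↦ t ^ (-(a * d)) * g (w * t ^ (-a))) atTop (𝓝 (L * w ^ (-d))) := by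
  rcases hw.eq_or_lt with rfl | hw
  · -- The limit is `L * 0 ^ (-d) = 0`, by the convention `0 ^ x = 0` for real `x ≠ 0`.
    simpa [Real.zero_rpow (neg_ne_zero.2 hd.ne')] using
      (tendsto_rpow_neg_atTop (mul_pos ha hd)).mul_const (g 0)
  · exact tendsto_rpow_neg_mul_comp_of_pos hg ha hw

theorem tendsto_rpow_mul_of_sub_isLittleO {f g : ℝ → ℝ} {L : ℝ}
    (hfg : (fun t ↦ f t - g t) =o[atTop] fun t ↦ t ^ (-a))
    (hg : Tendsto (fun t ↦ t ^ a * g t) atTop (𝓝 L)) :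
    Tendsto (fun t ↦ t ^ a * f t) atTop (𝓝 L) := by
  rw [← add_zero L]
  refine (hg.add hfg.tendsto_div_nhds_zero).congr' ?_
  filter_upwards [eventually_ge_atTop 0] with t ht
  rw [Real.rpow_neg ht, div_inv_eq_mul]
  ring

theorem isLittleO_rpow_neg_rpow_neg {b : ℝ} (hab : a < b) :
    (fun t : ℝ ↦ t ^ (-b)) =o[atTop] fun t ↦ t ^ (-a) := by
  refine isLittleO_of_tendsto' ?_ ((tendsto_rpow_neg_atTop (sub_pos.2 hab)).congr' ?_)
  · filter_upwards [eventually_gt_atTop 0] with t ht hzero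
    exact absurd hzero (Real.rpow_pos_of_pos ht _).ne'
  · filter_upwards [eventually_gt_atTop 0] with t ht
    rw [← Real.rpow_sub ht]
    ring_nf

theorem isLittleO_rpow_neg_of_abs_le {f : ℝ → ℝ} {b C : ℝ} (hab : a < b)
    (hf : ∀ᶠ t in atTop, |f t| ≤ C * t ^ (-b)) : f =o[atTop] fun t ↦ t ^ (-a) := by
  have hbig : f =O[atTop] fun t ↦ t ^ (-b) := by
    refine IsBigO.of_bound C ?_
    filter_upwards [hf, eventually_ge_atTop 0] with t hft ht
    rwa [Real.norm_eq_abs, Real.norm_of_nonneg (Real.rpow_nonneg ht _)]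
  exact hbig.trans_isLittleO (isLittleO_rpow_neg_rpow_neg hab)

theorem tendsto_rpow_mul_half_sq_sub_sq_pow {p q : ℝ → ℝ} {P Q : ℝ} (n : ℕ)
    (hp : Tendsto (fun t ↦ t ^ a * p t) atTop (𝓝 P))
    (hq : Tendsto (fun t ↦ t ^ a * q t) atTop (𝓝 Q)) :
    Tendsto (fun t ↦ t ^ (2 * (n : ℝ) * a) * (1 / 2 * (p t ^ 2 - q t ^ 2) ^ n)) atTop
      (𝓝 (1 / 2 * (P ^ 2 - Q ^ 2) ^ n)) := by
  refine ((((hp.pow 2).sub (hq.pow 2)).pow n).const_mul (1 / 2)).congr' ?_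
  filter_upwards [eventually_ge_atTop 0] with t ht
  have hpow : t ^ (2 * (n : ℝ) * a) = ((t ^ a) ^ 2) ^ n := by
    rw [← pow_mul, ← Real.rpow_mul_natCast ht]
    push_cast
    ring_nf
  rw [hpow, mul_left_comm, ← mul_pow]
  ring

end PowerScaling

section Exponents

variable {n : ℕ}

theorem gam_pos (n : ℕ) : 0 < gam n := by
  unfold gam
  positivity

theorem del_pos (hn : 1 < n) : 0 < del n := by
  have hn' : (1 : ℝ) < n := by exact_mod_cast hn
  exact div_pos (by positivity) (sub_pos.2 hn')

theorem gam_mul_one_add_del (hn : n ≠ 1) : gam n * (1 + del n) = eps n := by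
  have hn' : (n : ℝ) - 1 ≠ 0 := sub_ne_zero.2 (by exact_mod_cast hn)
  unfold gam del eps
  field_simp
  ring

theorem rpow_alph_mul_div_sqrt {t : ℝ} (ht : 0 < t) (w : ℝ) :
    t ^ alph n * w / √t = w * t ^ (-gam n) := by
  rw [Real.sqrt_eq_rpow, mul_comm, mul_div_assoc, ← Real.rpow_sub ht, alph, sub_sub_cancel_left]

end Exponents

theorem mu1_zero : mu1 0 = 0 := by simp [mu1]

theorem hasDerivAt_mu1 (y : ℝ) : HasDerivAt mu1 (kap * Real.exp (-(y / 2) ^ 2)) y := by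
  have hgauss : Continuous fun σ : ℝ ↦ Real.exp (-σ ^ 2) := by fun_prop
  have hint := (hgauss.integral_hasStrictDerivAt 0 (y / 2)).hasDerivAt
  refine ((hint.comp y ((hasDerivAt_id y).div_const 2)).const_mul _).congr_deriv ?_
  rw [kap]
  ring

section ReactiveScale

variable {n : ℕ}

theorem tendsto_rpow_gam_mul_mu1 (n : ℕ) (w : ℝ) :
    Tendsto (fun t : ℝ ↦ t ^ gam n * mu1 (w * t ^ (-gam n))) atTop (𝓝 (kap * w)) := by
  simpa using tendsto_rpow_mul_comp_of_hasDerivAt (hasDerivAt_mu1 0) mu1_zero (gam_pos n) w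

theorem tendsto_rpow_gam_mul_uu (n : ℕ) (z : ℝ) :
    Tendsto (fun t : ℝ ↦ t ^ gam n * uu (t ^ alph n * z) t) atTop (𝓝 (-(kap * z))) := by
  refine (tendsto_rpow_gam_mul_mu1 n z).neg.congr' ?_
  filter_upwards [eventually_gt_atTop 0] with t ht
  rw [uu, rpow_alph_mul_div_sqrt ht, mul_neg]

theorem rpow_gam_mul_vInf (hn : n ≠ 1) (η μ h : ℝ → ℝ) {t : ℝ} (ht : 0 < t) (z : ℝ) :
    t ^ gam n * vInf n η μ h (t ^ alph n * z) t =
      t ^ gam n * mu1 (|z| * t ^ (-gam n)) + t ^ (-(gam n * del n)) * μ (|z| * t ^ (-gam n))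
        + phi1 n η |z| + t ^ (-(2 * gam n)) * phi2 n h |z| := by
  have hα : 0 < t ^ alph n := Real.rpow_pos_of_pos ht _
  have hμ₂ : t ^ gam n * t ^ (-eps n) = t ^ (-(gam n * del n)) := by
    rw [← Real.rpow_add ht, ← gam_mul_one_add_del hn]
    ring_nf
  have hφ₁ : t ^ gam n * t ^ (-gam n) = 1 := by
    rw [← Real.rpow_add ht, add_neg_cancel, Real.rpow_zero]
  have hφ₂ : t ^ gam n * t ^ (-(3 * gam n)) = t ^ (-(2 * gam n)) := by
    rw [← Real.rpow_add ht]
    ring_nf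
  rw [vInf, abs_mul, abs_of_pos hα, rpow_alph_mul_div_sqrt ht, mul_div_cancel_left₀ _ hα.ne']
  simp only [mul_add, ← mul_assoc, hμ₂, hφ₁, hφ₂, one_mul]

theorem tendsto_rpow_gam_mul_vInf (hn : 1 < n) (η : ℝ → ℝ) {μ : ℝ → ℝ} (h : ℝ → ℝ)
    (hμ : Tendsto (fun y ↦ y ^ del n * μ y) (𝓝[>] 0) (𝓝 (lam n))) (z : ℝ) :
    Tendsto (fun t : ℝ ↦ t ^ gam n * vInf n η μ h (t ^ alph n * z) t) atTop
      (𝓝 (kap * |z| + η |z|)) := by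
  have hφ₂ : Tendsto (fun t : ℝ ↦ t ^ (-(2 * gam n)) * phi2 n h |z|) atTop (𝓝 0) := by
    simpa using (tendsto_rpow_neg_atTop (mul_pos two_pos (gam_pos n))).mul_const (phi2 n h |z|)
  have hμ₂ := tendsto_rpow_neg_mul_comp_of_nonneg hμ (del_pos hn) (gam_pos n) (abs_nonneg z)
  have hmatch : kap * |z| + lam n * |z| ^ (-del n) + phi1 n η |z| + 0 = kap * |z| + η |z| := by
    rw [phi1]
    ring
  rw [← hmatch]
  refine ((((tendsto_rpow_gam_mul_mu1 n |z|).add hμ₂).add_const _).add hφ₂).congr' ?_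
  filter_upwards [eventually_gt_atTop 0] with t ht
  rw [rpow_gam_mul_vInf hn.ne' η μ h ht]

theorem reaction_front_reactive_scale_general (n : ℕ) (hn : 1 < n) (η μ h : ℝ → ℝ)
    (hμ : Tendsto (fun y ↦ y ^ del n * μ y) (𝓝[>] 0) (𝓝 (lam n))) (v : ℝ → ℝ → ℝ) (z : ℝ)
    (hv : (fun t ↦ v (t ^ alph n * z) t - vInf n η μ h (t ^ alph n * z) t)
      =o[atTop] fun t ↦ t ^ (-gam n)) :
    Tendsto
      (fun t : ℝ ↦ t ^ (2 * (n : ℝ) * gam n) *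
        (1 / 2 * (v (t ^ alph n * z) t ^ 2 - uu (t ^ alph n * z) t ^ 2) ^ n))
      atTop (𝓝 (1 / 2 * (2 * kap * |z| * η |z| + η |z| ^ 2) ^ n)) := by
  have hv_lim := tendsto_rpow_mul_of_sub_isLittleO hv (tendsto_rpow_gam_mul_vInf hn η h hμ z)
  have hsq : (kap * |z| + η |z|) ^ 2 - (-(kap * z)) ^ 2 = 2 * kap * |z| * η |z| + η |z| ^ 2 := by
    linear_combination kap ^ 2 * sq_abs z
  rw [← hsq]
  exact tendsto_rpow_mul_half_sq_sub_sq_pow n hv_lim (tendsto_rpow_gam_mul_uu n z)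

end ReactiveScale

/-- The reaction front on the reactive scale: for every z ∈ ℝ,
t^{2nγ} F(t^α z, t) → (1/2)(2κ|z|η(|z|) + η(|z|)²)ⁿ = (1/2)η''(|z|) as t → ∞,
where F(x,t) = (1/2)(v(x,t)² − u(x,t)²)ⁿ. -/
theorem reaction_front_reactive_scale (n : ℕ) (hn : 4 ≤ n) (η μ h : ℝ → ℝ)
    (hη : IsReactiveProfile n η) (hμ : IsDiffusiveProfile n μ) (hh : IsCorrector n η h)
    (τ C : ℝ) (hτ : 0 < τ) (hC : 0 < C) (v : ℝ → ℝ → ℝ)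
    (hv : ∀ x : ℝ, ∀ t ≥ τ, |v x t - vInf n η μ h x t| ≤ C * t ^ (-(4 * gam n)))
    (z : ℝ) :
    Filter.Tendsto
      (fun t : ℝ => t ^ (2 * (n : ℝ) * gam n) *
        ((1 : ℝ) / 2 * (v (t ^ alph n * z) t ^ 2 - uu (t ^ alph n * z) t ^ 2) ^ n))
      Filter.atTop
      (nhds ((1 : ℝ) / 2 * (2 * kap * |z| * η |z| + η |z| ^ 2) ^ n)) ∧
    (1 : ℝ) / 2 * (2 * kap * |z| * η |z| + η |z| ^ 2) ^ n
      = 1 / 2 * derivWithin (derivWithin η (Set.Ici 0)) (Set.Ici 0) |z| := by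
  have herr := isLittleO_rpow_neg_of_abs_le (by linarith [gam_pos n] : gam n < 4 * gam n)
    ((eventually_ge_atTop τ).mono fun t ht ↦ hv (t ^ alph n * z) t ht)
  exact ⟨reaction_front_reactive_scale_general n (by lia) η μ h hμ.2.2.2.1 v z herr,
    by rw [hη.2.2.1 |z| (abs_nonneg z)]⟩
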